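/- Let p and q be coprime integers with q > 0 and p ≠ −q, and let σ ∈ PGL₂(ℚ) be given by σ(z) = (qz + q)/(pz − q) (an involution). Then for every algebraic number α with α ∉ {0, −1}, h(α) + h(σ(α)) ≥ log max(|p − q|/2, q). Moreover, if p − q is even, then equality holds for α = 1. -/

import Mathlib

/- For a nonzero `f ∈ ℤ[X]`, the Mahler measure `M(f) = |a_n| ∏ max(|α_i|,1)`. -/
open Polynomial

noncomputable def mahlerMeasure (f : ℤ[X]) : ℝ :=
  |(f.leadingCoeff : ℝ)| *
    (((f.map (Int.castRingHom ℂ)).roots).map (fun z => max ‖z‖ 1)).prod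

/-- The primitive minimal polynomial over `ℤ` of an algebraic number. -/
noncomputable def intMinpoly (α : ℂ) : ℤ[X] :=
  (IsLocalization.integerNormalization (nonZeroDivisors ℤ) (minpoly ℚ α)).primPart

/-- The absolute logarithmic Weil height `h(α) = (1/n) log M(f)`. -/
noncomputable def height (α : ℂ) : ℝ :=
  Real.log (mahlerMeasure (intMinpoly α)) / (minpoly ℚ α).natDegree


lemma arch_aux1 (p q r t : ℝ) (hq : 0 < q) (hr : 1 ≤ r) (ht : |t| ≤ r)
    (hD : 2 * q < |p - q|) : (|p-q|/2)^2 * (r^2 + 2*t+1) ≤ p^2*r^2 - 2*p*q*t + q^2 := by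
  rw [abs_le] at ht
  rw [div_pow, sq_abs]
  rcases lt_abs.1 hD with h | h
  · have h1 : 0 ≤ (r - t) * (2*p*q + (p-q)^2/2) := by
      apply mul_nonneg (by linarith); nlinarith
    have h2 : 0 ≤ (p+q)*(r-1) := mul_nonneg (by linarith) (by linarith)
    have h3 : 0 ≤ (p*r-q - (p-q)*(r+1)/2) * (p*r-q + (p-q)*(r+1)/2) := by
      apply mul_nonneg <;> nlinarith
    nlinarith
  · have h1 : 0 ≤ (r - t) * ((p+q)^2/2) := by
      apply mul_nonneg (by linarith); positivity
    have h3 : 0 ≤ (-p*r+q - (-p+q)*(r+1)/2) * (-p*r+q + (-p+q)*(r+1)/2) := by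
      apply mul_nonneg <;> nlinarith
    nlinarith

lemma lin_nonneg (a b r t : ℝ) (ht : |t| ≤ r) (h1 : 0 ≤ a + b * r) (h2 : 0 ≤ a - b * r) :
    0 ≤ a + b * t := by
  have : |b * t| ≤ |b * r| := by
    rw [abs_mul, abs_mul]
    exact mul_le_mul_of_nonneg_left (ht.trans (le_abs_self _)) (abs_nonneg b)
  have h3 : |b * r| ≤ a := abs_le.2 ⟨by linarith, by linarith⟩
  linarith [neg_abs_le (b*t)]

lemma arch_aux2 (p q r t : ℝ) (hq : 0 < q) (hr : r ≤ 1) (ht : |t| ≤ r)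
    (hD : 2 * q < |p - q|) (hr2 : q ≤ |p-q|/2 * r) :
    (|p-q|/2)^2 * r^2 * (r^2 + 2*t+1) ≤ p^2*r^2 - 2*p*q*t + q^2 := by
  have hr0 : 0 ≤ r := (abs_nonneg t).trans ht
  suffices h : 0 ≤ (p^2*r^2 + q^2 - (|p-q|/2)^2 * r^2 * (r^2+1)) + (-2*p*q - (|p-q|/2)^2 * r^2*2) * t by
    nlinarith
  apply lin_nonneg _ _ _ _ ht
  · rw [div_pow, sq_abs]
    rcases lt_abs.1 hD with h | h
    · rw [abs_of_pos (by linarith)] at hr2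
      have h1 : 0 ≤ (1-r) * ((p-q)/2*r - q) := mul_nonneg (by linarith) (by linarith)
      have h4 : 0 ≤ (p-q)*r*(r+1)/2 := div_nonneg (mul_nonneg (mul_nonneg (by linarith) hr0) (by linarith)) (by norm_num)
      have h3 : 0 ≤ (p*r-q - (p-q)*r*(r+1)/2) * (p*r-q + (p-q)*r*(r+1)/2) := by
        apply mul_nonneg <;> nlinarith
      nlinarith
    · rw [abs_of_neg (by linarith)] at hr2
      have h1 : 0 ≤ (1-r) * ((q-p)/2*r + q) := mul_nonneg (by linarith) (by nlinarith)
      have h4 : 0 ≤ (q-p)*r*(r+1)/2 := div_nonneg (mul_nonneg (mul_nonneg (by linarith) hr0) (by linarith)) (by norm_num)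
      have h3 : 0 ≤ (-p*r+q - (q-p)*r*(r+1)/2) * (-p*r+q + (q-p)*r*(r+1)/2) := by
        apply mul_nonneg <;> nlinarith
      nlinarith
  · rw [div_pow, sq_abs]
    rcases lt_abs.1 hD with h | h
    · rw [abs_of_pos (by linarith)] at hr2
      have h4 : 0 ≤ (p-q)*r*(1-r)/2 := div_nonneg (mul_nonneg (mul_nonneg (by linarith) hr0) (by linarith)) (by norm_num)
      have h3 : 0 ≤ (p*r+q - (p-q)*r*(1-r)/2) * (p*r+q + (p-q)*r*(1-r)/2) := by
        apply mul_nonneg <;> nlinarith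
      nlinarith
    · rw [abs_of_neg (by linarith)] at hr2
      have h1 : 0 ≤ (1+r) * ((q-p)/2*r - q) := mul_nonneg (by linarith) (by linarith)
      have h4 : 0 ≤ (q-p)*r*(1-r)/2 := div_nonneg (mul_nonneg (mul_nonneg (by linarith) hr0) (by linarith)) (by norm_num)
      have h3 : 0 ≤ (-p*r-q - (q-p)*r*(1-r)/2) * (-p*r-q + (q-p)*r*(1-r)/2) := by
        apply mul_nonneg <;> nlinarith
      nlinarith

lemma arch (p q : ℝ) (hq : 0 < q) (z : ℂ) :
    max (|p-q|/2) q * (‖z‖ * ‖z+1‖) ≤ max ‖z‖ 1 * max ‖(q:ℂ) - p * z‖ ‖(q:ℂ)+q*z‖ := by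
  have e1 : ‖(q:ℂ)+q*z‖ = q * ‖z+1‖ := by
    rw [show (q:ℂ)+q*z = q*(z+1) by ring, norm_mul, Complex.norm_real, Real.norm_of_nonneg hq.le]
  have hq1 : q * (‖z‖ * ‖z+1‖) ≤ max ‖z‖ 1 * max ‖(q:ℂ) - p * z‖ ‖(q:ℂ)+q*z‖ := by
    calc q * (‖z‖ * ‖z+1‖) = ‖z‖ * (q * ‖z+1‖) := by ring
      _ ≤ _ := by
        gcongr
        · exact le_max_left _ _
        · rw [← e1]; exact le_max_right _ _
  rcases le_or_gt (|p-q|/2) q with h | h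
  · rwa [max_eq_right h]
  rw [max_eq_left h.le]
  have n1 : ‖z+1‖^2 = ‖z‖^2 + 2*z.re + 1 := by
    rw [← Complex.normSq_eq_norm_sq, ← Complex.normSq_eq_norm_sq, Complex.normSq_apply, Complex.normSq_apply]; simp; ring
  have n2 : ‖(q:ℂ) - p * z‖^2 = p^2*‖z‖^2 - 2*p*q*z.re + q^2 := by
    rw [← Complex.normSq_eq_norm_sq, ← Complex.normSq_eq_norm_sq, Complex.normSq_apply, Complex.normSq_apply]; simp; ring
  have hre := Complex.abs_re_le_norm z
  rcases le_total 1 ‖z‖ with hz | hz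
  · have := arch_aux1 p q ‖z‖ z.re hq hz hre (by linarith)
    rw [← n1, ← n2, ← mul_pow] at this
    have := le_of_sq_le_sq this (norm_nonneg _)
    rw [max_eq_left hz]
    calc _ = ‖z‖ * (|p-q|/2 * ‖z+1‖) := by ring
      _ ≤ ‖z‖ * ‖(q:ℂ) - p * z‖ := by gcongr
      _ ≤ _ := by gcongr; exact le_max_left _ _
  · rw [max_eq_right hz, one_mul]
    rcases le_total q (|p-q|/2 * ‖z‖) with h2 | h2
    · have := arch_aux2 p q ‖z‖ z.re hq hz hre (by linarith) h2
      rw [← n1, ← n2, ← mul_pow, ← mul_pow] at this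
      have := le_of_sq_le_sq this (norm_nonneg _)
      exact le_trans (by linarith) (le_max_left _ _)
    · refine le_trans ?_ (le_max_right _ _)
      rw [e1, ← mul_assoc]; gcongr

lemma mm_eq (f : ℤ[X]) :
    _root_.mahlerMeasure f = (f.map (Int.castRingHom ℂ)).mahlerMeasure := by
  rw [Polynomial.mahlerMeasure_eq_leadingCoeff_mul_prod_roots, _root_.mahlerMeasure,
    leadingCoeff_map_of_injective (RingHom.injective_int _)]
  simp only [max_comm, eq_intCast, Complex.norm_intCast]

lemma mm_mul (f g : ℤ[X]) :
    _root_.mahlerMeasure (f * g) = _root_.mahlerMeasure f * _root_.mahlerMeasure g := by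
  simp [mm_eq, Polynomial.mahlerMeasure_mul]

lemma mm_C (c : ℤ) : _root_.mahlerMeasure (C c) = |(c : ℝ)| := by
  rw [mm_eq, map_C, Polynomial.mahlerMeasure_const, eq_intCast, Complex.norm_intCast]

lemma mm_pos (f : ℤ[X]) (hf : f ≠ 0) : 0 < _root_.mahlerMeasure f := by
  rw [mm_eq]
  apply Polynomial.mahlerMeasure_pos_of_ne_zero
  rwa [Ne, Polynomial.map_eq_zero_iff (RingHom.injective_int _)]

lemma mm_lin (a b : ℂ) : (C a * X + C b).mahlerMeasure = max ‖a‖ ‖b‖ := by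
  by_cases ha : a = 0
  · simp [ha]
  · exact Polynomial.mahlerMeasure_C_mul_X_add_C ha b

lemma intMinpoly_prim (α : ℂ) : (intMinpoly α).IsPrimitive := isPrimitive_primPart _

lemma intMinpoly_map (α : ℂ) (hα : IsAlgebraic ℚ α) :
    ∃ r : ℚ, r ≠ 0 ∧ (intMinpoly α).map (algebraMap ℤ ℚ) = C r * minpoly ℚ α := by
  obtain ⟨b, hb, h⟩ := IsLocalization.integerNormalization_spec (nonZeroDivisors ℤ) (minpoly ℚ α)
  have hb0 : b ≠ 0 := nonZeroDivisors.ne_zero hb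
  have hm : minpoly ℚ α ≠ 0 := minpoly.ne_zero hα.isIntegral
  set N := IsLocalization.integerNormalization (nonZeroDivisors ℤ) (minpoly ℚ α) with hN
  have hc := N.eq_C_content_mul_primPart
  have h' : C (N.content : ℚ) * (intMinpoly α).map (algebraMap ℤ ℚ) = C (b : ℚ) * minpoly ℚ α := by
    have h2 : N.map (algebraMap ℤ ℚ) = C (b : ℚ) * minpoly ℚ α := by
      rw [h, ← Int.cast_smul_eq_zsmul ℚ, smul_eq_C_mul]
    rw [← h2]
    conv_rhs => rw [hc]
    simp [intMinpoly, ← hN]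
  have hc0 : (N.content : ℚ) ≠ 0 := by
    intro h0
    rw [h0] at h'
    simp [hb0, hm] at h'
  refine ⟨(N.content : ℚ)⁻¹ * b, by positivity, ?_⟩
  rw [C_mul, mul_assoc, ← h', ← mul_assoc, ← C_mul, inv_mul_cancel₀ hc0]
  simp

lemma intMinpoly_natDegree (α : ℂ) (hα : IsAlgebraic ℚ α) :
    (intMinpoly α).natDegree = (minpoly ℚ α).natDegree := by
  obtain ⟨r, hr, h⟩ := intMinpoly_map α hα
  rw [← natDegree_map_eq_of_injective (RingHom.injective_int (algebraMap ℤ ℚ)), h,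
    natDegree_C_mul hr]

lemma intMinpoly_aeval_rat (α : ℂ) (hα : IsAlgebraic ℚ α) (x : ℚ) (hx : (x : ℂ) ≠ α)
    : ((intMinpoly α).map (algebraMap ℤ ℚ)).eval x ≠ 0 := by
  obtain ⟨r, hr, h⟩ := intMinpoly_map α hα
  rw [h, eval_mul, eval_C]
  refine mul_ne_zero hr fun h0 => ?_
  have hirr := minpoly.irreducible hα.isIntegral
  have hd : X - C x ∣ minpoly ℚ α := dvd_iff_isRoot.2 h0
  have h2 := (irreducible_X_sub_C x).dvd_symm hirr hd
  obtain ⟨k, hk⟩ := h2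
  have := congrArg (aeval α) hk
  rw [map_mul, minpoly.aeval, zero_mul] at this
  simp only [map_sub, aeval_X, aeval_C, eq_ratCast] at this
  exact hx (sub_eq_zero.1 this).symm

lemma intMinpoly_dvd (α : ℂ) (hα : IsAlgebraic ℚ α) (G : ℤ[X]) (hG : aeval α G = 0) :
    intMinpoly α ∣ G := by
  obtain ⟨r, hr, h⟩ := intMinpoly_map α hα
  apply (intMinpoly_prim α).dvd_of_fraction_map_dvd_fraction_map (K := ℚ)
  rw [h]
  have h1 : minpoly ℚ α ∣ G.map (algebraMap ℤ ℚ) := minpoly.dvd _ _ (by rwa [aeval_map_algebraMap])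
  exact (C_mul_dvd hr).2 h1

lemma intMinpoly_root (α : ℂ) (hα : IsAlgebraic ℚ α) : aeval α (intMinpoly α) = 0 := by
  obtain ⟨r, hr, h⟩ := intMinpoly_map α hα
  have := congrArg (aeval α) h
  rwa [aeval_map_algebraMap, map_mul, minpoly.aeval, mul_zero] at this

lemma intMinpoly_eq_C_mul (α : ℂ) (hα : IsAlgebraic ℚ α) (G : ℤ[X]) (hG : aeval α G = 0)
    (hd : G.natDegree ≤ (minpoly ℚ α).natDegree) : ∃ c : ℤ, G = C c * intMinpoly α := by
  obtain ⟨k, hk⟩ := intMinpoly_dvd α hα G hG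
  by_cases hG0 : G = 0
  · exact ⟨0, by simp [hG0]⟩
  have hk0 : k ≠ 0 := by rintro rfl; simp at hk; exact hG0 hk
  have h1 := natDegree_mul (intMinpoly_prim α).ne_zero hk0
  rw [← hk, intMinpoly_natDegree α hα] at h1
  have h2 : k.natDegree = 0 := by omega
  refine ⟨k.coeff 0, ?_⟩
  rw [← eq_C_of_natDegree_eq_zero h2, mul_comm, hk]

lemma height_rat (a b : ℤ) (hb : b ≠ 0) (hab : IsCoprime a b) :
    height ((a : ℂ) / b) = Real.log (max |(a : ℝ)| |(b : ℝ)|) := by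
  have e : ((a : ℂ) / b) = algebraMap ℚ ℂ ((a : ℚ) / b) := by simp
  have hα : IsAlgebraic ℚ ((a : ℂ) / b) := by rw [e]; exact isAlgebraic_algebraMap _
  have hm : (minpoly ℚ ((a : ℂ) / b)).natDegree = 1 := by
    rw [e, minpoly.eq_X_sub_C]; exact natDegree_X_sub_C _
  have hbC : (b : ℂ) ≠ 0 := by exact_mod_cast hb
  obtain ⟨c, hc⟩ := intMinpoly_eq_C_mul _ hα (C b * X + C (-a))
    (by simp; field_simp; simp) (by rw [hm]; exact natDegree_linear_le)
  have h0 : c ∣ b := ⟨(intMinpoly ((a : ℂ) / b)).coeff 1, by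
    have := congrArg (fun P => coeff P 1) hc
    simp only [coeff_add, coeff_C_mul, coeff_C_succ, coeff_X_one] at this
    simpa using this⟩
  have h1 : c ∣ a := by
    have := congrArg (fun P => coeff P 0) hc
    simp only [coeff_add, coeff_C_mul, coeff_C_zero, coeff_X_zero] at this
    rw [← dvd_neg]
    exact ⟨_, by simpa using this⟩
  have hu : IsUnit c := hab.isUnit_of_dvd' h1 h0
  have hc1 : |(c : ℝ)| = 1 := by
    rw [← Int.cast_abs, Int.isUnit_iff_abs_eq.1 hu]; simp
  have h2 := congrArg _root_.mahlerMeasure hc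
  rw [mm_mul, mm_C, hc1, one_mul, mm_eq] at h2
  rw [height, hm, ← h2]
  have : (C b * X + C (-a)).map (Int.castRingHom ℂ) = C (b : ℂ) * X + C (-a : ℂ) := by simp
  rw [this, mm_lin, max_comm]
  simp

lemma homog_eval (f : ℂ[X]) (n : ℕ) (hn : f.natDegree = n) (A B : ℂ) :
    ∑ i ∈ Finset.range (n + 1), f.coeff i * A ^ i * B ^ (n - i)
      = f.leadingCoeff * (f.roots.map (fun z => A - z * B)).prod := by
  have hs : f.Splits := IsAlgClosed.splits f
  have hcard : f.roots.card = n := by rw [← hn]; exact hs.natDegree_eq_card_roots.symm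
  by_cases hB : B = 0
  · subst hB
    rw [Finset.sum_eq_single n]
    · simp [leadingCoeff, hn, hcard]
    · intro i hi hin
      rw [Finset.mem_range] at hi
      rw [zero_pow (by omega), mul_zero]
    · simp
  · have h1 : f.eval (A / B) = f.leadingCoeff * (f.roots.map (fun z => A / B - z)).prod := by
      conv_lhs => rw [hs.eq_prod_roots]
      simp [eval_multiset_prod]
    have h2 : (f.roots.map (fun z => A - z * B)).prod
        = (f.roots.map (fun z => A / B - z)).prod * B ^ n := by
      rw [← hcard, ← Multiset.card_map (fun z => A / B - z), ← Multiset.prod_replicate,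
        ← Multiset.map_const', Multiset.map_map, ← Multiset.prod_map_mul]
      congr 1
      apply Multiset.map_congr rfl
      intro z _
      simp; field_simp
    rw [h2, ← mul_assoc, ← h1, eval_eq_sum_range, hn, Finset.sum_mul]
    refine Finset.sum_congr rfl fun i hi => ?_
    rw [Finset.mem_range] at hi
    rw [div_pow, ← Nat.sub_add_cancel (show i ≤ n by omega), pow_add]
    simp only [Nat.add_sub_cancel]
    field_simp

/-- The polynomial `(pX - q)^n f((qX+q)/(pX-q))`. -/
noncomputable def trG (p q : ℤ) (f : ℤ[X]) (n : ℕ) : ℤ[X] :=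
  ∑ i ∈ Finset.range (n + 1), C (f.coeff i) * (C q * X + C q) ^ i * (C p * X - C q) ^ (n - i)

lemma trG_natDegree (p q : ℤ) (f : ℤ[X]) (n : ℕ) : (trG p q f n).natDegree ≤ n := by
  apply natDegree_sum_le_of_forall_le
  intro i hi
  rw [Finset.mem_range] at hi
  have h1 : (C q * X + C q).natDegree ≤ 1 := natDegree_linear_le
  have h2 : (C p * X - C q).natDegree ≤ 1 := by
    rw [sub_eq_add_neg, ← C_neg]; exact natDegree_linear_le
  have h3 := natDegree_pow_le_of_le i h1
  have h4 := natDegree_pow_le_of_le (n - i) h2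
  have h5 := natDegree_mul_le_of_le (natDegree_mul_le_of_le (natDegree_C (f.coeff i)).le h3) h4
  refine h5.trans (by omega)

lemma trG_map (p q : ℤ) (f : ℤ[X]) (n : ℕ) (hn : f.natDegree = n) :
    (trG p q f n).map (Int.castRingHom ℂ) = C (f.leadingCoeff : ℂ) *
      ((f.map (Int.castRingHom ℂ)).roots.map
        (fun z => C ((q : ℂ) - p * z) * X + C ((q : ℂ) + q * z))).prod := by
  apply Polynomial.funext
  intro x
  have h := homog_eval (f.map (Int.castRingHom ℂ)) n
    (by rw [natDegree_map_eq_of_injective (RingHom.injective_int _), hn]) (q * x + q) (p * x - q)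
  rw [leadingCoeff_map_of_injective (RingHom.injective_int _)] at h
  simp only [trG, Polynomial.map_sum, eval_finsetSum, eval_mul, eval_C, eval_multiset_prod,
    Multiset.map_map, Polynomial.map_mul, Polynomial.map_pow, eval_pow]
  simp only [coeff_map, eq_intCast] at h
  simp only [map_C, Polynomial.map_add, Polynomial.map_sub, Polynomial.map_mul, map_X, eval_C,
    eval_add, eval_sub, eval_mul, eval_X, Function.comp_def]
  simp only [eq_intCast]
  rw [h]
  congr 2
  apply Multiset.map_congr rfl
  intro z _
  ring

lemma trG_mm (p q : ℤ) (f : ℤ[X]) (n : ℕ) (hn : f.natDegree = n) :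
    _root_.mahlerMeasure (trG p q f n) = |(f.leadingCoeff : ℝ)| *
      ((f.map (Int.castRingHom ℂ)).roots.map
        (fun z => max ‖(q : ℂ) - p * z‖ ‖(q : ℂ) + q * z‖)).prod := by
  rw [mm_eq, trG_map p q f n hn, Polynomial.mahlerMeasure_mul, Polynomial.mahlerMeasure_const,
    Polynomial.prod_mahlerMeasure_eq_mahlerMeasure_prod, Multiset.map_map]
  simp only [Function.comp_def, mm_lin, Complex.norm_intCast]

lemma eval_roots (f : ℤ[X]) (x : ℤ) : |((f.eval x : ℤ) : ℝ)| = |(f.leadingCoeff : ℝ)| *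
    ((f.map (Int.castRingHom ℂ)).roots.map (fun z => ‖(x : ℂ) - z‖)).prod := by
  have hs : (f.map (Int.castRingHom ℂ)).Splits := IsAlgClosed.splits _
  have h := congrArg (fun P => ‖eval (x : ℂ) P‖) hs.eq_prod_roots
  simp only [eval_mul, eval_C, eval_multiset_prod, norm_mul, Multiset.map_map] at h
  rw [leadingCoeff_map_of_injective (RingHom.injective_int _)] at h
  have e : eval (x : ℂ) (f.map (Int.castRingHom ℂ)) = ((f.eval x : ℤ) : ℂ) := by
    rw [← eq_intCast (Int.castRingHom ℂ) x, eval_map_apply]; simp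
  rw [e, Complex.norm_intCast] at h
  rw [h]
  have := map_multiset_prod (normHom : ℂ →*₀ ℝ)
    (Multiset.map (fun z => (x : ℂ) - z) (f.map (Int.castRingHom ℂ)).roots)
  simp only [Multiset.map_map, Function.comp_def] at this
  simp [Function.comp_def]
  left
  simpa using this

lemma mm_bound (p q : ℤ) (hq : 0 < q) (f : ℤ[X]) (n : ℕ) (hn : f.natDegree = n) :
    (max ((|p - q| : ℝ) / 2) (q : ℝ)) ^ n * (|((f.eval 0 : ℤ) : ℝ)| * |((f.eval (-1) : ℤ) : ℝ)|)
      ≤ _root_.mahlerMeasure f * _root_.mahlerMeasure (trG p q f n) := by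
  have hs : (f.map (Int.castRingHom ℂ)).Splits := IsAlgClosed.splits _
  have hcard : (f.map (Int.castRingHom ℂ)).roots.card = n := by
    rw [← hs.natDegree_eq_card_roots, natDegree_map_eq_of_injective (RingHom.injective_int _), hn]
  rw [trG_mm p q f n hn, _root_.mahlerMeasure, eval_roots, eval_roots]
  set s := (f.map (Int.castRingHom ℂ)).roots
  set M := (max ((|p - q| : ℝ) / 2) (q : ℝ))
  have hM : M ^ n = (s.map (fun _ => M)).prod := by simp [hcard]
  rw [hM]
  calc _ = |(f.leadingCoeff : ℝ)| ^ 2 * ((s.map (fun _ => M)).prod *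
        ((s.map (fun z => ‖((0 : ℤ) : ℂ) - z‖)).prod *
          (s.map (fun z => ‖((-1 : ℤ) : ℂ) - z‖)).prod)) := by ring
    _ = |(f.leadingCoeff : ℝ)| ^ 2 * (s.map (fun z => M * (‖z‖ * ‖z + 1‖))).prod := by
      rw [← Multiset.prod_map_mul, ← Multiset.prod_map_mul]
      congr 2
      apply Multiset.map_congr rfl
      intro z _
      rw [← norm_neg (z + 1), ← norm_neg z]
      congr 3
      · simp
      · push_cast; ring_nf
    _ ≤ |(f.leadingCoeff : ℝ)| ^ 2 * (s.map (fun z => max ‖z‖ 1 *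
          max ‖(q : ℂ) - p * z‖ ‖(q : ℂ) + q * z‖)).prod := by
      gcongr
      apply Multiset.prod_map_le_prod_map₀
      · intro z _
        have : (0 : ℝ) < q := by exact_mod_cast hq
        have : 0 ≤ M := this.le.trans (le_max_right _ _)
        positivity
      · intro z _
        have := arch (p : ℝ) q (by exact_mod_cast hq) z
        simpa using this
    _ = _ := by rw [Multiset.prod_map_mul]; ring

lemma lower (p q : ℤ) (hpq : IsCoprime p q) (hq : 0 < q) (hp : p ≠ -q) (α : ℂ)
    (hα : IsAlgebraic ℚ α) (h0 : α ≠ 0) (h1 : α ≠ -1) (hd : (p : ℂ) * α - q ≠ 0) :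
    Real.log (max ((|p - q| : ℝ) / 2) (q : ℝ)) ≤
      height α + height (((q : ℂ) * α + (q : ℂ)) / ((p : ℂ) * α - (q : ℂ))) := by
  set β := ((q : ℂ) * α + (q : ℂ)) / ((p : ℂ) * α - (q : ℂ)) with hβ
  have hqC : (q : ℂ) ≠ 0 := by exact_mod_cast hq.ne'
  have hpqC : (p : ℂ) + q ≠ 0 := by
    exact_mod_cast fun h : p + q = 0 => hp (by omega)
  have hβd : (p : ℂ) * β - q = q * (p + q) / (p * α - q) := by
    rw [hβ]; field_simp; ring
  have hβd0 : (p : ℂ) * β - q ≠ 0 := by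
    rw [hβd]; exact div_ne_zero (mul_ne_zero hqC hpqC) hd
  have hβn : (q : ℂ) * β + q = q * (p + q) / (p * α - q) * α := by
    rw [hβ, div_mul_eq_mul_div, eq_div_iff hd, add_mul, mul_assoc, div_mul_cancel₀ _ hd]; ring
  have hαβ : α = (q * β + q) / (p * β - q) := by
    rw [hβn, ← hβd, mul_div_cancel_left₀ _ hβd0]
  have hmem : ∀ (K : IntermediateField ℚ ℂ) (x : ℂ), x ∈ K →
      ((q : ℂ) * x + q) / (p * x - q) ∈ K := fun K x hx =>
    K.div_mem (K.add_mem (K.mul_mem (intCast_mem K q) hx) (intCast_mem K q))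
      (K.sub_mem (K.mul_mem (intCast_mem K p) hx) (intCast_mem K q))
  have hβmem : β ∈ IntermediateField.adjoin ℚ {α} :=
    hmem _ _ (IntermediateField.mem_adjoin_simple_self ℚ α)
  have hαmem : α ∈ IntermediateField.adjoin ℚ {β} := by
    have := hmem _ _ (IntermediateField.mem_adjoin_simple_self ℚ β)
    rwa [← hαβ] at this
  have hadj : IntermediateField.adjoin ℚ {α} = IntermediateField.adjoin ℚ {β} :=
    le_antisymm (IntermediateField.adjoin_simple_le_iff.2 hαmem)
      (IntermediateField.adjoin_simple_le_iff.2 hβmem)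
  have hβa : IsAlgebraic ℚ β :=
    ((((isAlgebraic_intCast (R := ℚ) q).mul hα).add (isAlgebraic_intCast q)).mul
      (((isAlgebraic_intCast p).mul hα).sub (isAlgebraic_intCast q)).inv)
  have hdeg : (minpoly ℚ α).natDegree = (minpoly ℚ β).natDegree := by
    rw [← IntermediateField.adjoin.finrank hα.isIntegral,
      ← IntermediateField.adjoin.finrank hβa.isIntegral, hadj]
  set n := (minpoly ℚ α).natDegree with hn
  have hnpos : 0 < n := minpoly.natDegree_pos hα.isIntegral
  set f := intMinpoly α with hf
  have hfn : f.natDegree = n := intMinpoly_natDegree α hα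
  have hroot : aeval β (trG p q f n) = 0 := by
    have hr := intMinpoly_root α hα
    rw [← hf, aeval_eq_sum_range, hfn] at hr
    have : aeval β (trG p q f n) = (p * β - q) ^ n * ∑ i ∈ Finset.range (n + 1), f.coeff i • α ^ i := by
      rw [trG, map_sum, Finset.mul_sum]
      refine Finset.sum_congr rfl fun i hi => ?_
      rw [Finset.mem_range] at hi
      have h3 : (q : ℂ) * β + q = (p * β - q) * α := by rw [hβn, hβd]
      simp only [map_mul, map_pow, map_add, map_sub, aeval_C, aeval_X]
      simp only [algebraMap_int_eq, eq_intCast]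
      rw [h3, zsmul_eq_mul, mul_pow]
      have h4 : ((p : ℂ) * β - q) ^ n = (p * β - q) ^ i * (p * β - q) ^ (n - i) := by
        rw [← pow_add]; congr 1; omega
      rw [h4]; ring
    rw [this, hr, mul_zero]
  obtain ⟨c, hc⟩ := intMinpoly_eq_C_mul β hβa (trG p q f n) hroot
    (by rw [← hdeg]; exact trG_natDegree p q f n)
  -- `c` divides `f(0) f(-1)`
  have hf0 : f.eval 0 ≠ 0 := by
    have := intMinpoly_aeval_rat α hα 0 (by simpa using h0.symm)
    intro h
    apply this
    have := eval_map_apply (f := algebraMap ℤ ℚ) (p := f) 0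
    rwa [map_zero, h, map_zero] at this
  have hf1 : f.eval (-1) ≠ 0 := by
    have := intMinpoly_aeval_rat α hα (-1) (by simpa using h1.symm)
    intro h
    apply this
    have := eval_map_apply (f := algebraMap ℤ ℚ) (p := f) (-1)
    simpa [h] using this
  have hG1 : (trG p q f n).eval (-1) = (-(p + q)) ^ n * f.eval 0 := by
    rw [trG, eval_finsetSum, Finset.sum_eq_single 0]
    · simp [← coeff_zero_eq_eval_zero]; ring
    · intro i _ hi
      simp [hi]
    · simp
  have hG0 : (trG p q f n).eval 0 = (-q) ^ n * f.eval (-1) := by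
    rw [trG, eval_finsetSum, eval_eq_sum_range, hfn, Finset.mul_sum]
    refine Finset.sum_congr rfl fun i hi => ?_
    rw [Finset.mem_range] at hi
    have h4 : (-q) ^ n = (-q) ^ i * (-q) ^ (n - i) := by
      rw [← pow_add]; congr 1; omega
    rw [h4]
    simp
    have h5 : q ^ i = (-q) ^ i * (-1) ^ i := by rw [← mul_pow]; simp
    rw [h5]; ring
  have hd1 : c ∣ (p + q) ^ n * (f.eval 0 * f.eval (-1)) := by
    have : c ∣ (-(p + q)) ^ n * f.eval 0 := by rw [← hG1, hc]; simp
    rw [neg_pow, mul_assoc, (IsUnit.pow n isUnit_one.neg).dvd_mul_left] at this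
    rw [← mul_assoc]; exact this.mul_right _
  have hd0 : c ∣ q ^ n * (f.eval 0 * f.eval (-1)) := by
    have : c ∣ (-q) ^ n * f.eval (-1) := by rw [← hG0, hc]; simp
    rw [neg_pow, mul_assoc, (IsUnit.pow n isUnit_one.neg).dvd_mul_left] at this
    rw [mul_left_comm]; exact this.mul_left _
  have hcop : IsCoprime ((p + q) ^ n) (q ^ n) := by
    apply IsCoprime.pow
    simpa using hpq.add_mul_left_left 1
  have hcd : c ∣ f.eval 0 * f.eval (-1) := by
    obtain ⟨u, v, huv⟩ := hcop
    have := dvd_add (hd1.mul_left u) (hd0.mul_left v)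
    rwa [← mul_assoc u, ← mul_assoc v, ← add_mul, huv, one_mul] at this
  have hprod : f.eval 0 * f.eval (-1) ≠ 0 := mul_ne_zero hf0 hf1
  have hcle : |(c : ℝ)| ≤ |((f.eval 0 : ℤ) : ℝ)| * |((f.eval (-1) : ℤ) : ℝ)| := by
    rw [← abs_mul]
    have := Int.le_of_dvd (abs_pos.2 hprod) ((abs_dvd_abs _ _).2 hcd)
    exact_mod_cast this
  have hc0 : c ≠ 0 := fun h => hprod (by rw [h] at hcd; exact zero_dvd_iff.1 hcd)
  have hcpos : 0 < |(c : ℝ)| := abs_pos.2 (by exact_mod_cast hc0)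
  have hb := mm_bound p q hq f n hfn
  rw [hc, mm_mul, mm_C] at hb
  set M := (max ((|p - q| : ℝ) / 2) (q : ℝ))
  have hqR : (0 : ℝ) < q := by exact_mod_cast hq
  have hM : 0 < M := hqR.trans_le (le_max_right _ _)
  have hmf := mm_pos f (intMinpoly_prim α).ne_zero
  have hmg := mm_pos (intMinpoly β) (intMinpoly_prim β).ne_zero
  have hfin : M ^ n ≤ _root_.mahlerMeasure f * _root_.mahlerMeasure (intMinpoly β) := by
    have h5 : M ^ n * |(c : ℝ)| ≤
        _root_.mahlerMeasure f * _root_.mahlerMeasure (intMinpoly β) * |(c : ℝ)| := by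
      calc _ ≤ _ := mul_le_mul_of_nonneg_left hcle (pow_pos hM n).le
        _ ≤ _ := hb
        _ = _ := by ring
    exact le_of_mul_le_mul_right h5 hcpos
  have hlog := Real.log_le_log (pow_pos hM n) hfin
  rw [Real.log_pow, Real.log_mul hmf.ne' hmg.ne'] at hlog
  rw [height, height, ← hdeg, ← add_div, le_div_iff₀ (by exact_mod_cast hnpos)]
  linarith

/-- Row 2 of Table 1: for `σ(z) = (qz + q)/(pz - q)` (an involution) with `p, q` coprime,
`q > 0`, `p ≠ -q`: for every algebraic `α ∉ {0, -1}` one has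
`h(α) + h(σ(α)) ≥ log max(|p - q|/2, q)`, with equality at `α = 1` when `p - q` is even. -/
theorem table1_row2 (p q : ℤ) (hpq : IsCoprime p q) (hq : 0 < q) (hp : p ≠ -q) :
    (∀ α : ℂ, IsAlgebraic ℚ α → α ≠ 0 → α ≠ -1 →
      height α + height (((q : ℂ) * α + (q : ℂ)) / ((p : ℂ) * α - (q : ℂ)))
        ≥ Real.log (max ((|p - q| : ℝ) / 2) (q : ℝ))) ∧
    (2 ∣ p - q →
      height (1 : ℂ) + height (((q : ℂ) * 1 + (q : ℂ)) / ((p : ℂ) * 1 - (q : ℂ)))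
        = Real.log (max ((|p - q| : ℝ) / 2) (q : ℝ))) := by
  have hqC : (q : ℂ) ≠ 0 := by exact_mod_cast hq.ne'
  have hqR : (0 : ℝ) < q := by exact_mod_cast hq
  have hz : height 0 = 0 := by
    have := height_rat 0 1 one_ne_zero isCoprime_one_right
    simpa using this
  have ho : height 1 = 0 := by
    have := height_rat 1 1 one_ne_zero isCoprime_one_right
    simpa using this
  constructor
  · intro α hα h0 h1
    by_cases hd : (p : ℂ) * α - q = 0
    · have hp0 : p ≠ 0 := by
        rintro rfl
        simp at hd
        exact hq.ne' hd
      have hpC : (p : ℂ) ≠ 0 := by exact_mod_cast hp0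
      have hα' : α = (q : ℂ) / p := by
        rw [eq_div_iff hpC, mul_comm]; exact sub_eq_zero.1 hd
      rw [hd, div_zero, hz, add_zero, hα', height_rat q p hp0 hpq.symm]
      apply Real.log_le_log (hqR.trans_le (le_max_right _ _))
      apply max_le
      · have h3 := abs_sub (p : ℝ) q
        have h4 := le_max_left |(q : ℝ)| |(p : ℝ)|
        have h5 := le_max_right |(q : ℝ)| |(p : ℝ)|
        linarith
      · exact (le_abs_self _).trans (le_max_left _ _)
    · exact lower p q hpq hq hp α hα h0 h1 hd
  · rintro ⟨m, hm⟩
    rw [ho, zero_add]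
    have hp' : p = 2 * m + q := by omega
    by_cases hm0 : m = 0
    · have hpq' : p = q := by omega
      subst hpq'
      have : p = 1 := by
        have := isCoprime_self.1 hpq
        rcases Int.isUnit_iff.1 this with h | h <;> omega
      subst this
      simpa using hz
    · have hmC : (m : ℂ) ≠ 0 := by exact_mod_cast hm0
      have e : ((q : ℂ) * 1 + q) / (p * 1 - q) = (q : ℂ) / m := by
        rw [hp']; push_cast; field_simp; ring
      have hcop : IsCoprime q m := by
        obtain ⟨u, v, huv⟩ := hpq
        exact ⟨u + v, 2 * u, by rw [← huv, hp']; ring⟩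
      rw [e, height_rat q m hm0 hcop, max_comm, abs_of_pos hqR]
      congr 2
      rw [hp']
      push_cast
      rw [show (2 * (m : ℝ) + q - q) = 2 * m by ring, abs_mul]
      simp
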